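/- arXiv:1909.09570 — 2 statements merged into one kernel-verified Lean document; each statement's English description precedes it below -/
import Mathlib

section
/- Let V ⊂ ℤ² be a finite set such that every point of V is an extreme point of the convex hull P := convexHull ℝ V (viewing ℤ² ⊂ ℝ²), and the lattice points of P are exactly the points of V, i.e. P ∩ ℤ² = V. Then the cardinality of V is at most 4. In particular, there is no convex lattice pentagon whose only lattice points are its five vertices. -/
/-!
Two lattice points with the same class in `L / 2L` have a lattice point as their midpoint. If they
lie in a convex set all of whose lattice points are extreme, then so does this midpoint, and being
extreme it lies strictly between no two distinct points of the set. Hence distinct lattice points of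
the set are incongruent modulo `2L`, and `L / 2L` has `2 ^ rank L` elements.
-/

/-- The embedding of the lattice `ℤ²` into `ℝ²`. -/
def latticeEmbed₂ (v : Fin 2 → ℤ) : Fin 2 → ℝ := fun i => (v i : ℝ)

section Extreme

variable {𝕜 E : Type*} [Ring 𝕜] [LinearOrder 𝕜] [IsStrictOrderedRing 𝕜] [Invertible (2 : 𝕜)]
  [AddCommGroup E] [Module 𝕜 E]

theorem eq_of_midpoint_mem_extremePoints {K : Set E} {x y : E} (hx : x ∈ K) (hy : y ∈ K)
    (h : midpoint 𝕜 x y ∈ K.extremePoints 𝕜) : x = y :=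
  have ⟨hxm, hym⟩ := (mem_extremePoints.1 h).2 x hx y hy (midpoint_mem_openSegment x y)
  hxm.trans hym.symm

end Extreme

section Congruence

variable {L : Type*} [AddCommGroup L]

theorem modN_mkQ_eq_iff {n : ℕ} {a b : L} :
    ModN.mkQ n a = ModN.mkQ n b ↔ ∃ d : L, n • d = a - b := by
  refine (Submodule.Quotient.eq _).trans ?_
  simp only [LinearMap.mem_range, LinearMap.lsmul_apply, natCast_zsmul]

theorem exists_map_eq_midpoint_of_mkQ_eq {𝕜 E : Type*} [Ring 𝕜] [Invertible (2 : 𝕜)]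
    [AddCommGroup E] [Module 𝕜 E] (f : L →+ E) {a b : L} (hab : ModN.mkQ 2 a = ModN.mkQ 2 b) :
    ∃ c : L, f c = midpoint 𝕜 (f a) (f b) := by
  obtain ⟨d, hd⟩ := modN_mkQ_eq_iff.1 hab
  have hsum : a + b = (2 : ℕ) • (b + d) := by
    rw [smul_add, hd]
    abel
  refine ⟨b + d, ?_⟩
  rw [midpoint_eq_smul_add, ← map_add, hsum, map_nsmul, ← Nat.cast_smul_eq_nsmul 𝕜,
    Nat.cast_ofNat, invOf_smul_smul]

end Congruence

section LatticePoints

variable {𝕜 E L : Type*} [Ring 𝕜] [LinearOrder 𝕜] [IsStrictOrderedRing 𝕜] [Invertible (2 : 𝕜)]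
  [AddCommGroup E] [Module 𝕜 E] [AddCommGroup L]

theorem map_eq_map_of_mkQ_eq (f : L →+ E) {K : Set E} (hK : Convex 𝕜 K)
    (hext : K ∩ Set.range f ⊆ K.extremePoints 𝕜) {a b : L} (ha : f a ∈ K) (hb : f b ∈ K)
    (hab : ModN.mkQ 2 a = ModN.mkQ 2 b) : f a = f b := by
  have hmid : midpoint 𝕜 (f a) (f b) ∈ K ∩ Set.range f :=
    ⟨hK.midpoint_mem ha hb, exists_map_eq_midpoint_of_mkQ_eq f hab⟩
  exact eq_of_midpoint_mem_extremePoints ha hb (hext hmid)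

theorem encard_inter_range_le_two_pow_finrank
    [Module.Free ℤ L] [Module.Finite ℤ L] (f : L →+ E) {K : Set E} (hK : Convex 𝕜 K)
    (hext : K ∩ Set.range f ⊆ K.extremePoints 𝕜) :
    (K ∩ Set.range f).encard ≤ 2 ^ Module.finrank ℤ L := by
  have hinv : Set.LeftInvOn f (Function.invFun f) (K ∩ Set.range f) :=
    fun _ hx => Function.invFun_eq hx.2
  have hinj : Set.InjOn (ModN.mkQ 2 ∘ Function.invFun f) (K ∩ Set.range f) := by
    intro x hx y hy hxy
    rw [← hinv hx, ← hinv hy]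
    exact map_eq_map_of_mkQ_eq f hK hext ((hinv hx).symm ▸ hx.1) ((hinv hy).symm ▸ hy.1) hxy
  calc (K ∩ Set.range f).encard
      = (ModN.mkQ 2 ∘ Function.invFun f '' (K ∩ Set.range f)).encard := hinj.encard_image.symm
    _ ≤ ENat.card (ModN L 2) := Set.encard_le_card
    _ = 2 ^ Module.finrank ℤ L := by
      rw [ENat.card_eq_coe_natCard, ModN.natCard_eq, Nat.cast_pow, Nat.cast_ofNat]

theorem lattice_polygon_no_interior_points_card_le_four_general
    [Module.Free ℤ L] [Module.Finite ℤ L] {f : L →+ E} (hf : Function.Injective f) {V : Set L}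
    (hext : ∀ v ∈ V, f v ∈ (convexHull 𝕜 (f '' V)).extremePoints 𝕜)
    (hlat : ∀ x, f x ∈ convexHull 𝕜 (f '' V) → x ∈ V) :
    V.encard ≤ 2 ^ Module.finrank ℤ L := by
  have hvert : f '' V ⊆ convexHull 𝕜 (f '' V) ∩ Set.range f :=
    Set.subset_inter (subset_convexHull 𝕜 _) (Set.image_subset_range f V)
  have hhull : convexHull 𝕜 (f '' V) ∩ Set.range f ⊆ (convexHull 𝕜 (f '' V)).extremePoints 𝕜 := by
    rintro _ ⟨hx, x, rfl⟩
    exact hext x (hlat x hx)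
  calc V.encard
      = (f '' V).encard := (hf.encard_image V).symm
    _ ≤ (convexHull 𝕜 (f '' V) ∩ Set.range f).encard := Set.encard_le_encard hvert
    _ ≤ 2 ^ Module.finrank ℤ L :=
      encard_inter_range_le_two_pow_finrank f (convex_convexHull 𝕜 _) hhull

end LatticePoints

theorem latticeEmbed₂_injective : Function.Injective latticeEmbed₂ :=
  Int.cast_injective.comp_left

/-- The embedding `latticeEmbed₂` as an additive homomorphism: lattices are encoded here as
homomorphisms into the ambient space. -/
def latticeEmbed₂Hom : (Fin 2 → ℤ) →+ (Fin 2 → ℝ) where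
  toFun := latticeEmbed₂
  map_zero' := funext fun _ => Int.cast_zero
  map_add' _ _ := funext fun _ => Int.cast_add _ _

/-- A convex lattice polygon whose lattice points are exactly its vertices has at most
four vertices.  In particular there is no convex lattice pentagon whose only lattice
points are its five vertices. -/
theorem lattice_polygon_no_interior_points_card_le_four
    (V : Finset (Fin 2 → ℤ))
    (hext : ∀ v ∈ V, latticeEmbed₂ v ∈
      Set.extremePoints ℝ (convexHull ℝ (latticeEmbed₂ '' (V : Set (Fin 2 → ℤ)))))
    (hlat : ∀ x : Fin 2 → ℤ,
      latticeEmbed₂ x ∈ convexHull ℝ (latticeEmbed₂ '' (V : Set (Fin 2 → ℤ))) ↔ x ∈ V) :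
    V.card ≤ 4 := by
  have hcard := lattice_polygon_no_interior_points_card_le_four_general
    (f := latticeEmbed₂Hom) latticeEmbed₂_injective hext fun x => (hlat x).1
  exact_mod_cast (by simpa using hcard : (V.card : ℕ∞) ≤ 2 ^ 2)
end

section
/- Let S = {(−1,−1,0),(1,0,0),(1,1,1),(−2,−1,−1),(0,0,−1),(0,1,0)} ⊂ ℤ³ (a triangular prism). Then the origin lies in the interior of P := convexHull ℝ S, every point of S is an extreme point of P, and P ∩ ℤ³ = S ∪ {0}; i.e., S defines a terminal Fano polytope. -/
/-- The embedding of the lattice `ℤ³` into `ℝ³`. -/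
def latticeEmbed₃ (v : Fin 3 → ℤ) : Fin 3 → ℝ := fun i => (v i : ℝ)

/-!
A polytope cut out by integral inequalities makes all three properties combinatorial: the origin is
interior because it satisfies every inequality strictly, and a vertex is extreme because three
facets with linearly independent normals pass through it.

The polytope here is a triangle times a segment, up to an affine change of coordinates. With facet
inequalities `A x ≤ b`, the numbers `(b - A x) / 3` are the barycentric coordinates of the two
factors, which shows that the inequalities cut out exactly the convex hull of the vertices. For a
lattice point, the three slacks `b - A x` of the triangle are nonnegative integers with sum `3`
which are congruent modulo `3` to each other and to one slack of the segment. So they are either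
`3, 0, 0` in some order, and the point is a vertex, or `1, 1, 1`, and the point is the origin.
-/

open Matrix

section Polyhedron

variable {m n R : Type*} [Fintype n]

/-- The polyhedron of solutions of a system `A x ≤ b` of linear inequalities. The scalars are
arbitrary so that the same notion covers real points (`R = ℝ`) and lattice points (`R = ℤ`). -/
def polyhedron [NonUnitalNonAssocSemiring R] [LE R] (A : Matrix m n R) (b : m → R) :
    Set (n → R) :=
  {x | A *ᵥ x ≤ b}

theorem map_intCast_mulVec_intCast [Ring R] (A : Matrix m n ℤ) (x : n → ℤ) :
    (A.map Int.cast *ᵥ fun j => (x j : R)) = fun i => ((A *ᵥ x) i : R) :=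
  funext fun i => ((Int.castRingHom R).map_mulVec A x i).symm

theorem intCast_mem_polyhedron_iff [Ring R] [PartialOrder R] [IsOrderedRing R] [Nontrivial R]
    {A : Matrix m n ℤ} {b : m → ℤ} {x : n → ℤ} :
    (fun i => (x i : R)) ∈ polyhedron (A.map Int.cast) (fun i => (b i : R)) ↔
      x ∈ polyhedron A b := by
  simp only [polyhedron, Set.mem_ofPred_eq, Pi.le_def, map_intCast_mulVec_intCast, Int.cast_le]

theorem convex_polyhedron [CommSemiring R] [PartialOrder R] [IsOrderedRing R]
    (A : Matrix m n R) (b : m → R) : Convex R (polyhedron A b) :=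
  (convex_Iic b).linear_preimage A.mulVecLin

theorem mem_interior_polyhedron [Finite m] [Ring R] [LinearOrder R] [TopologicalSpace R]
    [OrderTopology R] [IsTopologicalRing R] {A : Matrix m n R} {b : m → R} {p : n → R}
    (hp : ∀ i, (A *ᵥ p) i < b i) : p ∈ interior (polyhedron A b) := by
  have hcont (i : m) : Continuous fun x => (A *ᵥ x) i := by
    unfold mulVec dotProduct
    fun_prop
  have hlt : ∀ᶠ x in nhds p, ∀ i, (A *ᵥ x) i < b i :=
    Filter.eventually_all.2 fun i => (hcont i).continuousAt.eventually_lt_const (hp i)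
  exact mem_interior_iff_mem_nhds.2 (hlt.mono fun x hx i => (hx i).le)

theorem mem_extremePoints_polyhedron [DecidableEq n] [CommRing R] [LinearOrder R]
    [IsStrictOrderedRing R] {A : Matrix m n R} {b : m → R} {p : n → R} (hp : p ∈ polyhedron A b)
    (e : n → m) (he : ∀ i, (A *ᵥ p) (e i) = b (e i)) (hdet : (A.submatrix e id).det ≠ 0) :
    p ∈ (polyhedron A b).extremePoints R := by
  refine mem_extremePoints_iff_left.2 ⟨hp, ?_⟩
  rintro x hx y hy ⟨s, t, hs, ht, hst, rfl⟩
  have htight (i : n) : (A *ᵥ x) (e i) = b (e i) := by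
    have hsum := he i
    simp only [mulVec_add, mulVec_smul, Pi.add_apply, Pi.smul_apply, smul_eq_mul] at hsum
    obtain rfl : t = 1 - s := by linarith
    refine (hx (e i)).antisymm (le_of_mul_le_mul_left ?_ hs)
    linarith [mul_le_mul_of_nonneg_left (hy (e i)) ht.le]
  have hker : A.submatrix e id *ᵥ (x - (s • x + t • y)) = 0 := by
    rw [mulVec_sub, sub_eq_zero]
    exact funext fun i => (htight i).trans (he i).symm
  exact sub_eq_zero.1 (eq_zero_of_mulVec_eq_zero hdet hker)

end Polyhedron

section SumEq

variable {ι : Type*} [Fintype ι] [DecidableEq ι] {f : ι → ℤ}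

theorem exists_eq_single_of_dvd_of_sum_eq {n : ℤ} (hn : n ≠ 0) (hf : 0 ≤ f)
    (hsum : ∑ i, f i = n) (hdvd : ∀ i, n ∣ f i) : ∃ i, f = Pi.single i n := by
  obtain ⟨j, -, hj⟩ := Finset.exists_ne_zero_of_sum_ne_zero (hsum.trans_ne hn)
  have hle : n ≤ f j := Int.le_of_dvd ((hf j).lt_of_ne' hj) (hdvd j)
  have hsplit := (Finset.add_sum_erase _ f (Finset.mem_univ j)).trans hsum
  have hrest : ∑ i ∈ Finset.univ.erase j, f i = 0 :=
    le_antisymm (by linarith) (Finset.sum_nonneg fun i _ => hf i)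
  refine ⟨j, funext fun i => ?_⟩
  obtain rfl | hij := eq_or_ne i j
  · rw [Pi.single_eq_same]
    linarith
  · rw [Pi.single_eq_of_ne hij]
    exact (Finset.sum_eq_zero_iff_of_nonneg fun i _ => hf i).1 hrest i
      (Finset.mem_erase.2 ⟨hij, Finset.mem_univ i⟩)

theorem exists_eq_single_or_eq_one_of_sum_eq_card (hf : 0 ≤ f)
    (hsum : ∑ i, f i = Fintype.card ι) (hmod : ∀ i j, f i ≡ f j [ZMOD Fintype.card ι]) :
    (∃ i, f = Pi.single i (Fintype.card ι : ℤ)) ∨ f = 1 := by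
  by_cases hpos : ∀ i, 1 ≤ f i
  · right
    have hone := (Finset.sum_eq_sum_iff_of_le fun i _ => hpos i).1
      (by rw [hsum, Finset.sum_const, Finset.card_univ, nsmul_one])
    exact funext fun i => (hone i (Finset.mem_univ i)).symm
  · left
    obtain ⟨k, hk⟩ := not_forall.1 hpos
    have hk0 : f k = 0 := (Int.le_of_lt_add_one (not_le.1 hk)).antisymm (hf k)
    have : Nonempty ι := ⟨k⟩
    exact exists_eq_single_of_dvd_of_sum_eq (Nat.cast_ne_zero.2 Fintype.card_ne_zero) hf hsum
      fun i => Int.modEq_zero_iff_dvd.1 (hk0 ▸ hmod i k)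

end SumEq

/-- The vertex of the prism at the end `j` of the lateral edge `i`. -/
def prismVertex : Fin 3 → Fin 2 → Fin 3 → ℤ :=
  ![![![-1, -1, 0], ![-2, -1, -1]], ![![1, 0, 0], ![0, 0, -1]], ![![1, 1, 1], ![0, 1, 0]]]

theorem range_uncurry_prismVertex :
    Set.range prismVertex.uncurry =
      {![-1, -1, 0], ![1, 0, 0], ![1, 1, 1], ![-2, -1, -1], ![0, 0, -1], ![0, 1, 0]} := by
  apply Set.Subset.antisymm
  · rintro _ ⟨⟨i, j⟩, rfl⟩
    fin_cases i <;> fin_cases j <;> simp [prismVertex]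
  · rintro _ (rfl | rfl | rfl | rfl | rfl | rfl)
    exacts [⟨(0, 0), rfl⟩, ⟨(1, 0), rfl⟩, ⟨(2, 0), rfl⟩, ⟨(0, 1), rfl⟩, ⟨(1, 1), rfl⟩,
      ⟨(2, 1), rfl⟩]

/-- The outer normals of the facets of the prism: `Sum.inl i` is the lateral facet opposite to the
edge `i`, and `Sum.inr j` is the base opposite to the ends `j` of the lateral edges. -/
def prismNormal : Matrix (Fin 3 ⊕ Fin 2) (Fin 3) ℤ :=
  fromRows !![1, 1, -1; -2, 1, 2; 1, -2, -1] !![-1, 2, -2; 1, -2, 2]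

/-- The right-hand sides of the facet inequalities of the prism, whose normals are the rows of
`prismNormal`. -/
def prismOffset : Fin 3 ⊕ Fin 2 → ℤ :=
  Sum.elim ![1, 1, 1] ![2, 1]

theorem prismOffset_pos (f : Fin 3 ⊕ Fin 2) : 0 < prismOffset f := by
  decide +revert

/-- The prism as a real polyhedron, given by its facet inequalities. -/
def prism : Set (Fin 3 → ℝ) :=
  polyhedron (prismNormal.map Int.cast) fun f => (prismOffset f : ℝ)

theorem latticeEmbed₃_mem_prism_iff {x : Fin 3 → ℤ} :
    latticeEmbed₃ x ∈ prism ↔ x ∈ polyhedron prismNormal prismOffset :=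
  intCast_mem_polyhedron_iff

section Slack

variable {R : Type*} [CommRing R]

/-- The slacks of a point in the facet inequalities of the prism, over any ring of scalars so that
they apply to real and to lattice points. -/
def prismSlack (x : Fin 3 → R) (f : Fin 3 ⊕ Fin 2) : R :=
  prismOffset f - (prismNormal.map Int.cast *ᵥ x) f

theorem prismSlack_eq (x : Fin 3 → R) :
    prismSlack x =
      Sum.elim
        ![1 - x 0 - x 1 + x 2, 1 + 2 * x 0 - x 1 - 2 * x 2, 1 - x 0 + 2 * x 1 + x 2]
        ![2 + x 0 - 2 * x 1 + 2 * x 2, 1 - x 0 + 2 * x 1 - 2 * x 2] := by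
  ext (i | j)
  · fin_cases i <;>
      simp only [prismSlack, prismOffset, prismNormal, mulVec, dotProduct, Fin.sum_univ_three,
        map_apply, fromRows_apply_inl, of_apply, Sum.elim_inl, cons_val, cons_val', Fin.zero_eta,
        Fin.mk_one, Fin.reduceFinMk] <;>
      push_cast <;> ring
  · fin_cases j <;>
      simp only [prismSlack, prismOffset, prismNormal, mulVec, dotProduct, Fin.sum_univ_three,
        map_apply, fromRows_apply_inr, of_apply, Sum.elim_inr, cons_val, cons_val', Fin.zero_eta,
        Fin.mk_one] <;>
      push_cast <;> ring

theorem sum_prismSlack_inl (x : Fin 3 → R) : ∑ i, prismSlack x (.inl i) = 3 := by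
  simp only [prismSlack_eq, Sum.elim_inl, Fin.sum_univ_three, cons_val]
  ring

theorem sum_prismSlack_inr (x : Fin 3 → R) : ∑ j, prismSlack x (.inr j) = 3 := by
  simp only [prismSlack_eq, Sum.elim_inr, Fin.sum_univ_two, cons_val]
  ring

end Slack

theorem prismSlack_prismVertex (i : Fin 3) (j : Fin 2) :
    prismSlack (prismVertex i j) = Sum.elim (Pi.single i 3) (Pi.single j 3) := by
  decide +revert

theorem prismSlack_nonneg_iff {x : Fin 3 → ℤ} :
    0 ≤ prismSlack x ↔ x ∈ polyhedron prismNormal prismOffset := by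
  have hmap : prismNormal.map (Int.cast : ℤ → ℤ) = prismNormal := map_id _
  simp only [polyhedron, prismSlack, Set.mem_ofPred_eq, Pi.le_def, Pi.zero_apply, hmap,
    Int.cast_id, sub_nonneg]

theorem prismVertex_mem_polyhedron_prismNormal (i : Fin 3) (j : Fin 2) :
    prismVertex i j ∈ polyhedron prismNormal prismOffset := by
  rw [← prismSlack_nonneg_iff, prismSlack_prismVertex]
  rintro (k | k)
  · exact (Pi.single_nonneg.2 zero_le_three : 0 ≤ (Pi.single i 3 : Fin 3 → ℤ)) k
  · exact (Pi.single_nonneg.2 zero_le_three : 0 ≤ (Pi.single j 3 : Fin 2 → ℤ)) k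

theorem zero_mem_polyhedron_prismNormal : 0 ∈ polyhedron prismNormal prismOffset := by
  intro f
  rw [mulVec_zero]
  exact (prismOffset_pos f).le

theorem sum_prismSlack_smul_prismVertex (p : Fin 3 → ℝ) :
    ∑ i, (prismSlack p (.inl i) / 3) •
      ∑ j, (prismSlack p (.inr j) / 3) • latticeEmbed₃ (prismVertex i j) = p := by
  ext k
  fin_cases k <;>
    simp only [Fin.sum_univ_three, Fin.sum_univ_two, Pi.add_apply, Pi.smul_apply, smul_eq_mul,
      prismSlack_eq, prismVertex, latticeEmbed₃, Sum.elim_inl, Sum.elim_inr, cons_val, Fin.zero_eta,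
      Fin.mk_one, Fin.reduceFinMk] <;>
    push_cast <;> ring

theorem convexHull_prismVertex :
    convexHull ℝ (latticeEmbed₃ '' Set.range prismVertex.uncurry) = prism := by
  apply Set.Subset.antisymm
  · refine convexHull_min ?_ (convex_polyhedron _ _)
    rintro _ ⟨_, ⟨⟨i, j⟩, rfl⟩, rfl⟩
    exact latticeEmbed₃_mem_prism_iff.2 (prismVertex_mem_polyhedron_prismNormal i j)
  · intro p hp
    have hconv := convex_convexHull ℝ (latticeEmbed₃ '' Set.range prismVertex.uncurry)
    have hnonneg (f) : 0 ≤ prismSlack p f / 3 := div_nonneg (sub_nonneg.2 (hp f)) zero_le_three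
    have hinl : ∑ i, prismSlack p (.inl i) / 3 = 1 := by
      rw [← Finset.sum_div, sum_prismSlack_inl, div_self three_ne_zero]
    have hinr : ∑ j, prismSlack p (.inr j) / 3 = 1 := by
      rw [← Finset.sum_div, sum_prismSlack_inr, div_self three_ne_zero]
    rw [← sum_prismSlack_smul_prismVertex p]
    refine hconv.sum_mem (fun i _ => hnonneg _) hinl fun i _ =>
      hconv.sum_mem (fun j _ => hnonneg _) hinr fun j _ => ?_
    exact subset_convexHull ℝ _ ⟨_, ⟨(i, j), rfl⟩, rfl⟩

theorem zero_mem_interior_prism : (0 : Fin 3 → ℝ) ∈ interior prism := by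
  refine mem_interior_polyhedron fun f => ?_
  simpa only [mulVec_zero, Pi.zero_apply, Int.cast_pos] using prismOffset_pos f

theorem latticeEmbed₃_prismVertex_mem_extremePoints (i : Fin 3) (j : Fin 2) :
    latticeEmbed₃ (prismVertex i j) ∈ prism.extremePoints ℝ := by
  let facetsThrough : Fin 3 → Fin 3 ⊕ Fin 2 := ![.inl (i + 1), .inl (i + 2), .inr (j + 1)]
  have htight : ∀ k,
      (prismNormal *ᵥ prismVertex i j) (facetsThrough k) = prismOffset (facetsThrough k) := by
    decide +revert
  have hdet : (prismNormal.submatrix facetsThrough id).det ≠ 0 := by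
    decide +revert
  have hmem := latticeEmbed₃_mem_prism_iff.2 (prismVertex_mem_polyhedron_prismNormal i j)
  refine mem_extremePoints_polyhedron hmem facetsThrough (fun k => ?_) ?_
  · rw [← htight k]
    exact congrFun (map_intCast_mulVec_intCast _ _) _
  · rw [submatrix_map, ← Int.cast_det]
    exact Int.cast_ne_zero.2 hdet

theorem prismSlack_int_injective : Function.Injective (prismSlack (R := ℤ)) := by
  intro x y hxy
  simp only [prismSlack_eq] at hxy
  have h₀ := congrFun hxy (.inl 0)
  have h₁ := congrFun hxy (.inl 1)
  have h₂ := congrFun hxy (.inr 1)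
  simp only [Sum.elim_inl, Sum.elim_inr, cons_val] at h₀ h₁ h₂
  ext k
  fin_cases k <;> dsimp only [Fin.zero_eta, Fin.mk_one, Fin.reduceFinMk] <;> omega

theorem prismSlack_inl_modEq (x : Fin 3 → ℤ) (i : Fin 3) :
    prismSlack x (.inl i) ≡ prismSlack x (.inr 1) [ZMOD 3] := by
  rw [prismSlack_eq, Int.modEq_iff_dvd]
  fin_cases i <;>
    simp only [Sum.elim_inl, Sum.elim_inr, Fin.zero_eta, Fin.mk_one, Fin.reduceFinMk, cons_val] <;>
    omega

theorem mem_range_prismVertex_of_prismSlack_inl_eq_single {x : Fin 3 → ℤ}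
    (hx : x ∈ polyhedron prismNormal prismOffset) {i : Fin 3}
    (hi : (fun k => prismSlack x (.inl k)) = Pi.single i 3) :
    x ∈ Set.range prismVertex.uncurry := by
  have hinl : prismSlack x (.inl (i + 1)) = 0 := by
    have hne : ∀ k : Fin 3, k + 1 ≠ k := by decide
    rw [congrFun hi (i + 1), Pi.single_eq_of_ne (hne i)]
  have hsum := sum_prismSlack_inr x
  have hdvd₁ : 3 ∣ prismSlack x (.inr 1) :=
    Int.modEq_zero_iff_dvd.1 (hinl ▸ (prismSlack_inl_modEq x (i + 1)).symm)
  have hdvd₀ : 3 ∣ prismSlack x (.inr 0) := by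
    rw [Fin.sum_univ_two] at hsum
    omega
  obtain ⟨j, hj⟩ := exists_eq_single_of_dvd_of_sum_eq three_ne_zero
    (fun j => prismSlack_nonneg_iff.2 hx (.inr j)) hsum (Fin.forall_fin_two.2 ⟨hdvd₀, hdvd₁⟩)
  refine ⟨(i, j), prismSlack_int_injective ?_⟩
  rw [Function.uncurry_apply_pair, prismSlack_prismVertex, ← hi, ← hj]
  exact Sum.elim_comp_inl_inr (prismSlack x)

theorem eq_zero_of_prismSlack_inl_eq_one {x : Fin 3 → ℤ}
    (hx : x ∈ polyhedron prismNormal prismOffset) (hone : (fun k => prismSlack x (.inl k)) = 1) :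
    x = 0 := by
  have hsum := sum_prismSlack_inr x
  rw [Fin.sum_univ_two] at hsum
  have hnonneg₀ := prismSlack_nonneg_iff.2 hx (.inr 0)
  have hnonneg₁ := prismSlack_nonneg_iff.2 hx (.inr 1)
  have hinl : prismSlack x (.inl 0) = 1 := congrFun hone 0
  have hmod := prismSlack_inl_modEq x 0
  have hinr : prismSlack x (.inr 0) = 2 ∧ prismSlack x (.inr 1) = 1 := by
    simp only [Pi.zero_apply, Int.ModEq, hinl] at hnonneg₀ hnonneg₁ hmod
    omega
  apply prismSlack_int_injective
  have hslack_zero : prismSlack (0 : Fin 3 → ℤ) =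
      Sum.elim (1 : Fin 3 → ℤ) ![2, 1] := by decide
  rw [hslack_zero, ← hone]
  ext (k | k)
  · rfl
  · fin_cases k
    exacts [hinr.1, hinr.2]

theorem mem_polyhedron_prismNormal_iff {x : Fin 3 → ℤ} :
    x ∈ polyhedron prismNormal prismOffset ↔ x ∈ Set.range prismVertex.uncurry ∨ x = 0 := by
  constructor
  · intro hx
    obtain ⟨i, hi⟩ | hone := exists_eq_single_or_eq_one_of_sum_eq_card
      (fun i => prismSlack_nonneg_iff.2 hx (.inl i)) (sum_prismSlack_inl x)
      fun i j => (prismSlack_inl_modEq x i).trans (prismSlack_inl_modEq x j).symm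
    · exact .inl (mem_range_prismVertex_of_prismSlack_inl_eq_single hx hi)
    · exact .inr (eq_zero_of_prismSlack_inl_eq_one hx hone)
  · rintro (⟨⟨i, j⟩, rfl⟩ | rfl)
    · exact prismVertex_mem_polyhedron_prismNormal i j
    · exact zero_mem_polyhedron_prismNormal

/-- The triangular prism with the given six vertices is a terminal Fano polytope (it corresponds to the toric Fano threefold of degree `81/2` and genus `21`). -/
theorem prism_is_terminal_fano (S : Set (Fin 3 → ℤ))
    (hS : S = {![-1,-1,0], ![1,0,0], ![1,1,1], ![-2,-1,-1], ![0,0,-1], ![0,1,0]})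
    (P : Set (Fin 3 → ℝ)) (hP : P = convexHull ℝ (latticeEmbed₃ '' S)) :
    (0 : Fin 3 → ℝ) ∈ interior P ∧
    (∀ s ∈ S, latticeEmbed₃ s ∈ Set.extremePoints ℝ P) ∧
    (∀ x : Fin 3 → ℤ, latticeEmbed₃ x ∈ P ↔ x ∈ S ∨ x = 0) := by
  rw [← range_uncurry_prismVertex] at hS
  obtain rfl : P = prism := by rw [hP, hS, convexHull_prismVertex]
  rw [hS]
  refine ⟨zero_mem_interior_prism, ?_, fun x => ?_⟩
  · rintro _ ⟨⟨i, j⟩, rfl⟩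
    exact latticeEmbed₃_prismVertex_mem_extremePoints i j
  · rw [latticeEmbed₃_mem_prism_iff, mem_polyhedron_prismNormal_iff]
end
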